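/- Let A = [a(i,j)] ∈ R^{N×N} be a fixed matrix with all entries in [0,1], and let f(π) := Σ_{i=1}^N a(i,π(i)). Then for every λ ≥ 0: E[ exp( λ ( f(π) − E[f(π)] ) ) ] ≤ exp( 2 E[f(π)] · λ ( e^{2λ} − 1 ) ). -/

import Mathlib

open scoped BigOperators Classical

/-- Expectation of `f` under the uniform distribution on `S_N`. -/
noncomputable def permExp (N : ℕ) (f : Equiv.Perm (Fin N) → ℝ) : ℝ :=
  (∑ σ : Equiv.Perm (Fin N), f σ) / (Nat.factorial N : ℝ)

open MeasureTheory in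
theorem aux_int_pow (n : ℕ) : Integrable (fun t : ℝ => t ^ n * Real.exp (-t))
    (volume.restrict (Set.Ioi 0)) := by
  have h := Real.GammaIntegral_convergent (s := (n : ℝ) + 1) (by positivity)
  simp only [add_sub_cancel_right, Real.rpow_natCast] at h
  exact h.congr_fun (fun t _ => by ring) measurableSet_Ioi

open MeasureTheory in
theorem aux_val_pow (n : ℕ) : ∫ t in Set.Ioi (0:ℝ), t ^ n * Real.exp (-t) = (n.factorial : ℝ) := by
  have h := Real.Gamma_eq_integral (s := (n : ℝ) + 1) (by positivity)
  simp only [add_sub_cancel_right, Real.rpow_natCast, Real.Gamma_nat_eq_factorial] at h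
  rw [h]
  exact setIntegral_congr_fun measurableSet_Ioi (fun t _ => by ring)

theorem aux_amgm (N : ℕ) (hN : 0 < N) (z : Fin N → ℝ) (hz : ∀ i, 0 ≤ z i) :
    ∏ i, z i ≤ ((∑ i, z i) / N) ^ N := by
  have hN' : (0:ℝ) < N := by exact_mod_cast hN
  have h := Real.geom_mean_le_arith_mean Finset.univ (fun _ : Fin N => (1:ℝ)) z
    (fun _ _ => zero_le_one) (by simpa using hN) (fun i _ => hz i)
  simp only [Real.rpow_one, one_mul, Finset.sum_const, Finset.card_univ, Fintype.card_fin,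
    nsmul_eq_mul, mul_one] at h
  have hp : 0 ≤ ∏ i, z i := Finset.prod_nonneg (fun i _ => hz i)
  have h2 := pow_le_pow_left₀ (Real.rpow_nonneg hp _) h N
  rwa [Real.rpow_inv_natCast_pow hp hN.ne'] at h2

open MeasureTheory in
theorem aux_expand (N : ℕ) (r : Fin N → ℝ) :
    Integrable (fun t : ℝ => (∏ i, (r i + t)) * Real.exp (-t)) (volume.restrict (Set.Ioi 0)) ∧
    ∫ t in Set.Ioi (0:ℝ), (∏ i, (r i + t)) * Real.exp (-t) =
      ∑ S : Finset (Fin N), ((N - S.card).factorial : ℝ) * ∏ i ∈ S, r i := by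
  have e : (fun t : ℝ => (∏ i, (r i + t)) * Real.exp (-t)) =
      fun t => ∑ S : Finset (Fin N), (∏ i ∈ S, r i) * (t ^ (N - S.card) * Real.exp (-t)) := by
    ext t
    rw [Finset.prod_add, Finset.sum_mul, Finset.powerset_univ]
    refine Finset.sum_congr rfl fun S _ => ?_
    rw [Finset.prod_const, Finset.card_sdiff_of_subset (Finset.subset_univ S), Finset.card_univ,
      Fintype.card_fin]
    ring
  rw [e]
  refine ⟨integrable_finsetSum _ fun S _ => (aux_int_pow _).const_mul _, ?_⟩
  rw [integral_finsetSum _ fun S _ => (aux_int_pow _).const_mul _]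
  refine Finset.sum_congr rfl fun S _ => ?_
  rw [integral_const_mul, aux_val_pow, mul_comm]

theorem aux_const (N : ℕ) (m : ℝ) (hm : 0 ≤ m) :
    ∑ S : Finset (Fin N), ((N - S.card).factorial : ℝ) * ∏ _i ∈ S, m ≤
      (N.factorial : ℝ) * Real.exp m := by
  have h : ∑ S : Finset (Fin N), ((N - S.card).factorial : ℝ) * ∏ _i ∈ S, m
      = (N.factorial : ℝ) * ∑ k ∈ Finset.range (N + 1), m ^ k / (k.factorial : ℝ) := by
    simp only [Finset.prod_const]
    rw [← Finset.powerset_univ, Finset.sum_powerset_apply_card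
      (fun k => ((N - k).factorial : ℝ) * m ^ k)]
    rw [Finset.card_univ, Fintype.card_fin, Finset.mul_sum]
    refine Finset.sum_congr rfl fun k hk => ?_
    have hk' : k ≤ N := by simpa [Nat.lt_succ_iff] using hk
    have := Nat.choose_mul_factorial_mul_factorial hk'
    have h3 : ((N.choose k : ℝ)) * k.factorial * (N - k).factorial = N.factorial := by
      exact_mod_cast this
    have h4 : (k.factorial : ℝ) ≠ 0 := by positivity
    rw [nsmul_eq_mul, ← h3]
    field_simp
  rw [h]
  exact mul_le_mul_of_nonneg_left (Real.sum_le_exp_of_nonneg hm _) (by positivity)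

open MeasureTheory in
theorem aux_main (N : ℕ) (hN : 0 < N) (r : Fin N → ℝ) (hr : ∀ i, 0 ≤ r i) :
    ∑ S : Finset (Fin N), ((N - S.card).factorial : ℝ) * ∏ i ∈ S, r i ≤
      (N.factorial : ℝ) * Real.exp ((∑ i, r i) / N) := by
  have hN' : (0:ℝ) < N := by exact_mod_cast hN
  refine le_trans ?_ (aux_const N ((∑ i, r i) / N)
    (div_nonneg (Finset.sum_nonneg fun i _ => hr i) hN'.le))
  rw [← (aux_expand N r).2, ← (aux_expand N fun _ => (∑ i, r i) / N).2]
  refine setIntegral_mono_on (aux_expand N r).1 (aux_expand N _).1 measurableSet_Ioi ?_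
  intro t ht
  have ht' : 0 < t := ht
  refine mul_le_mul_of_nonneg_right ?_ (Real.exp_pos _).le
  refine (aux_amgm N hN _ fun i => add_nonneg (hr i) ht'.le).trans (le_of_eq ?_)
  rw [Finset.sum_add_distrib, Finset.prod_const, Finset.card_univ, Fintype.card_fin]
  congr 1
  simp
  field_simp

theorem aux_count (N : ℕ) (S : Finset (Fin N)) (g : S → Fin N) :
    (Finset.univ.filter fun σ : Equiv.Perm (Fin N) => (fun i : S => σ i) = g).card
      ≤ (N - S.card).factorial := by
  rcases (Finset.univ.filter fun σ : Equiv.Perm (Fin N) =>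
    (fun i : S => σ i) = g).eq_empty_or_nonempty with h | ⟨σ₀, h₀⟩
  · rw [h]; simp
  have h₀' : ∀ i (hi : i ∈ S), σ₀ i = g ⟨i, hi⟩ := fun i hi => by
    have := (Finset.mem_filter.1 h₀).2
    exact congrFun this ⟨i, hi⟩
  have hc : Fintype.card { f : Equiv.Perm (Fin N) // ∀ a, ¬ (a ∉ S) → f a = a } =
      (N - S.card).factorial := by
    rw [← Fintype.card_congr (Equiv.Perm.subtypeEquivSubtypePerm (fun a : Fin N => a ∉ S)),
      Fintype.card_perm]
    congr 1
    simp [Fintype.card_subtype_compl]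
  rw [← hc, Fintype.card_subtype]
  refine Finset.card_le_card_of_injOn (fun σ => σ₀⁻¹ * σ) ?_ ?_
  · intro σ hσ
    have hσ' := (Finset.mem_filter.1 hσ).2
    refine Finset.mem_coe.2 (Finset.mem_filter.2 ⟨Finset.mem_univ _, fun a ha => ?_⟩)
    have ha' : a ∈ S := not_not.1 ha
    have h1 : σ a = g ⟨a, ha'⟩ := congrFun hσ' ⟨a, ha'⟩
    rw [Equiv.Perm.mul_apply, h1, ← h₀' a ha']
    simp
  · intro a _ b _ hab
    exact mul_left_cancel hab

theorem aux_sub (N : ℕ) (c : Fin N → Fin N → ℝ) (hc : ∀ i j, 0 ≤ c i j) (S : Finset (Fin N)) :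
    ∑ σ : Equiv.Perm (Fin N), ∏ i ∈ S, c i (σ i) ≤
      ((N - S.card).factorial : ℝ) * ∏ i ∈ S, ∑ j, c i j := by
  have h1 : ∏ i ∈ S, ∑ j, c i j = ∑ g : S → Fin N, ∏ i : S, c i (g i) := by
    rw [← Finset.prod_coe_sort, Finset.prod_univ_sum, Fintype.piFinset_univ]
  rw [h1, Finset.mul_sum]
  rw [← Finset.sum_fiberwise Finset.univ
    (fun (σ : Equiv.Perm (Fin N)) => (fun i : S => σ i)) _]
  refine Finset.sum_le_sum fun g _ => ?_
  have h2 : ∀ σ ∈ Finset.univ.filter (fun σ : Equiv.Perm (Fin N) => (fun i : S => σ i) = g),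
      ∏ i ∈ S, c i (σ i) = ∏ i : S, c i (g i) := by
    intro σ hσ
    rw [← (Finset.mem_filter.1 hσ).2, ← Finset.prod_coe_sort]
  rw [Finset.sum_congr rfl h2, Finset.sum_const, nsmul_eq_mul]
  refine mul_le_mul_of_nonneg_right ?_ (Finset.prod_nonneg fun i _ => hc _ _)
  exact_mod_cast aux_count N S g

theorem aux_per (N : ℕ) (hN : 0 < N) (c : Fin N → Fin N → ℝ) (hc : ∀ i j, 0 ≤ c i j) :
    ∑ σ : Equiv.Perm (Fin N), ∏ i, (1 + c i (σ i)) ≤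
      (N.factorial : ℝ) * Real.exp ((∑ i, ∑ j, c i j) / N) := by
  refine le_trans ?_ (aux_main N hN (fun i => ∑ j, c i j)
    fun i => Finset.sum_nonneg fun j _ => hc i j)
  simp only [Finset.prod_one_add, Finset.powerset_univ]
  rw [Finset.sum_comm]
  exact Finset.sum_le_sum fun S _ => aux_sub N c hc S

theorem aux_mean (N : ℕ) (hN : 0 < N) (a : Fin N → Fin N → ℝ) :
    permExp N (fun σ => ∑ i, a i (σ i)) = (∑ i, ∑ j, a i j) / N := by
  have : NeZero N := ⟨hN.ne'⟩
  have hN' : (N:ℝ) ≠ 0 := by exact_mod_cast hN.ne'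
  have key : ∀ i, (N:ℝ) * ∑ σ : Equiv.Perm (Fin N), a i (σ i) =
      (N.factorial : ℝ) * ∑ j, a i j := by
    intro i
    have h1 : ∀ k : Fin N, ∑ σ : Equiv.Perm (Fin N), a i (σ i) =
        ∑ σ : Equiv.Perm (Fin N), a i (σ i + k) := fun k =>
      (Equiv.sum_comp (Equiv.mulLeft (Equiv.addRight k))
        (fun σ : Equiv.Perm (Fin N) => a i (σ i))).symm
    have h2 : ∑ k : Fin N, ∑ σ : Equiv.Perm (Fin N), a i (σ i) =
        ∑ k : Fin N, ∑ σ : Equiv.Perm (Fin N), a i (σ i + k) :=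
      Finset.sum_congr rfl fun k _ => h1 k
    rw [Finset.sum_comm (f := fun (k : Fin N) (σ : Equiv.Perm (Fin N)) => a i (σ i + k))] at h2
    have h3 : ∀ σ : Equiv.Perm (Fin N), ∑ k : Fin N, a i (σ i + k) = ∑ j, a i j := fun σ =>
      Equiv.sum_comp (Equiv.addLeft (σ i)) (a i)
    simp only [h3] at h2
    simpa [Fintype.card_perm] using h2
  unfold permExp
  rw [Finset.sum_comm, div_eq_div_iff (by positivity) hN', mul_comm, Finset.mul_sum,
    Finset.sum_congr rfl fun i _ => key i, ← Finset.mul_sum, mul_comm]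

/-- MGF bound for a Hoeffding permutation statistic with entries in `[0,1]`. -/
theorem hoeffding_statistic_mgf_nonneg (N : ℕ)
    (a : Fin N → Fin N → ℝ)
    (ha : ∀ i j, a i j ∈ Set.Icc (0 : ℝ) 1)
    (lam : ℝ) (hlam : 0 ≤ lam) :
    permExp N (fun σ => Real.exp (lam *
        ((∑ i, a i (σ i)) - permExp N (fun σ' => ∑ i, a i (σ' i)))))
      ≤ Real.exp (2 * permExp N (fun σ' => ∑ i, a i (σ' i)) * lam *
          (Real.exp (2 * lam) - 1)) := by
  rcases Nat.eq_zero_or_pos N with rfl | hN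
  · simp [permExp]
  have hN' : (0:ℝ) < N := by exact_mod_cast hN
  rw [aux_mean N hN a]
  set m := (∑ i, ∑ j, a i j) / (N:ℝ) with hm
  have hm0 : 0 ≤ m := div_nonneg
    (Finset.sum_nonneg fun i _ => Finset.sum_nonneg fun j _ => (ha i j).1) hN'.le
  have hc0 : 0 ≤ Real.exp lam - 1 := by linarith [Real.add_one_le_exp lam]
  have hconv : ∀ x ∈ Set.Icc (0:ℝ) 1, Real.exp (lam * x) ≤ 1 + (Real.exp lam - 1) * x := by
    intro x hx
    have h := convexOn_exp.2 (Set.mem_univ (0:ℝ)) (Set.mem_univ lam)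
      (sub_nonneg.2 hx.2) hx.1 (by ring)
    simp only [smul_eq_mul, mul_zero, zero_add, Real.exp_zero, mul_one] at h
    rw [mul_comm lam x]
    linarith
  have hper := aux_per N hN (fun i j => (Real.exp lam - 1) * a i j)
    (fun i j => mul_nonneg hc0 (ha i j).1)
  have hs : (∑ i, ∑ j, (Real.exp lam - 1) * a i j) / (N:ℝ) = (Real.exp lam - 1) * m := by
    simp only [← Finset.mul_sum]
    rw [hm, mul_div_assoc]
  rw [hs] at hper
  have hle : ∑ σ : Equiv.Perm (Fin N), Real.exp (lam * ((∑ i, a i (σ i)) - m)) ≤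
      Real.exp (-(lam * m)) * ((N.factorial : ℝ) * Real.exp ((Real.exp lam - 1) * m)) := by
    refine le_trans ?_ (mul_le_mul_of_nonneg_left hper (Real.exp_pos _).le)
    rw [Finset.mul_sum]
    refine Finset.sum_le_sum fun σ _ => ?_
    rw [mul_sub, sub_eq_add_neg, add_comm, Real.exp_add, Finset.mul_sum, Real.exp_sum]
    refine mul_le_mul_of_nonneg_left ?_ (Real.exp_pos _).le
    exact Finset.prod_le_prod (fun i _ => (Real.exp_pos _).le) fun i _ => hconv _ (ha _ _)
  have hf : (0:ℝ) < N.factorial := by positivity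
  unfold permExp
  rw [div_le_iff₀ hf]
  refine hle.trans ?_
  have h1 : Real.exp lam - 1 ≤ lam * Real.exp lam := by
    have h := Real.add_one_le_exp (-lam)
    have h2 : Real.exp (-lam) * Real.exp lam = 1 := by rw [← Real.exp_add]; simp
    nlinarith [Real.exp_pos lam]
  have h2 : Real.exp lam ≤ Real.exp (2 * lam) := Real.exp_le_exp.2 (by linarith)
  have h3 : -(lam * m) + (Real.exp lam - 1) * m ≤ 2 * m * lam * (Real.exp (2 * lam) - 1) := by
    have h4 : Real.exp lam - 1 - lam ≤ 2 * lam * (Real.exp (2 * lam) - 1) := by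
      have h5 := mul_le_mul_of_nonneg_left h2 hlam
      have h6 : 0 ≤ lam * (Real.exp (2 * lam) - 1) := mul_nonneg hlam (by linarith)
      linarith
    have := mul_le_mul_of_nonneg_left h4 hm0
    linarith
  have h7 := Real.exp_le_exp.2 h3
  rw [Real.exp_add] at h7
  have := mul_le_mul_of_nonneg_right h7 hf.le
  linarith
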